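/- Let (d_i)_{i∈C} be a degree assignment for W and let α,β ∈ A¹ satisfy α∧β = 0 in A²_{W,k}. Then for every i ∈ C: β_i·(Σ_{j∈C} d_j·α_j) = α_i·(Σ_{j∈C} d_j·β_j) in k. In particular, if α_i = 0 and Σ_{j∈C} d_j·α_j ≠ 0 in k, then β_i = 0. -/

import Mathlib

/-!
Each component `i` is treated according to whether `p` divides its degree. If `p ∣ d i`, the
identity is the vanishing of the `i`-th coordinate of `α ∧ β` at infinity.

Otherwise it suffices to prove the identity after multiplication by `d i`. By Bezout, the products
`d i * d j` are sums of local intersection numbers, so the difference of the two sides becomes a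
sum, over all branches `δ` of the component `i`, of the local expressions in `ResCond`
(`degree_mul_eq_sum`; the terms `j = i`, on which Bezout says nothing, cancel). Each of these
vanishes (`resCond_of_wedge_eq_zero`): the contraction `ψ^a ∧ ψ^b ↦ ψ^b - ψ^a` followed by the
`δ`-coordinate kills the three-term relations spanning `I_P`, and sends the local part of `α ∧ β`
at `P` to the expression in `ResCond`.
-/

open scoped Classical

/-- The weak combinatorial type of a plane projective curve. -/
structure WeakComb (p : ℕ) where
  /-- the set of irreducible components -/
  C : Type
  [fintypeC : Fintype C]
  [decEqC : DecidableEq C]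
  [nonemptyC : Nonempty C]
  /-- the set of singular points -/
  S : Type
  [fintypeS : Fintype S]
  [decEqS : DecidableEq S]
  /-- the local branches at each singular point -/
  Δ : S → Type
  [fintypeΔ : ∀ P, Fintype (Δ P)]
  [decEqΔ : ∀ P, DecidableEq (Δ P)]
  /-- each branch belongs to a component -/
  φ : ∀ P, Δ P → C
  /-- local intersection multiplicities of pairs of branches -/
  μ : ∀ P, Δ P → Δ P → ℕ
  μ_symm : ∀ P δ δ', φ P δ ≠ φ P δ' → μ P δ δ' = μ P δ' δ
  μ_pos : ∀ P δ δ', φ P δ ≠ φ P δ' → 0 < μ P δ δ'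

attribute [instance] WeakComb.fintypeC WeakComb.decEqC WeakComb.nonemptyC
attribute [instance] WeakComb.fintypeS WeakComb.decEqS WeakComb.fintypeΔ WeakComb.decEqΔ

namespace WeakComb

variable {p : ℕ} (W : WeakComb p)

/-- μ_P(δ,δ') with the convention that it vanishes on pairs of branches of the same component. -/
def muk (P : W.S) (δ δ' : W.Δ P) : ℕ :=
  if W.φ P δ = W.φ P δ' then 0 else W.μ P δ δ'

/-- μ_P(δ, j): the multiplicity of intersection of the branch δ with the component j. -/
def muC (P : W.S) (δ : W.Δ P) (j : W.C) : ℕ :=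
  ∑ δ' : W.Δ P, if W.φ P δ' = j then W.muk P δ δ' else 0

/-- A degree assignment: positive degrees satisfying the Bezout condition. -/
def IsDegree (d : W.C → ℕ) : Prop :=
  (∀ i, 0 < d i) ∧
  ∀ i j, i ≠ j →
    d i * d j = ∑ P : W.S, ∑ δ : W.Δ P, if W.φ P δ = i then W.muC P δ j else 0

/-- The basis vector σ_i of A¹ = (C → ZMod p). -/
noncomputable def sigma (i : W.C) : W.C → ZMod p := Pi.single i 1

/-- The basis vector ψ_P^δ of A_P = (Δ_P → ZMod p). -/
noncomputable def psi (P : W.S) (δ : W.Δ P) : W.Δ P → ZMod p := Pi.single δ 1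

/-- ψ_P^δ ∧ ψ_P^δ' as an element of Λ² A_P. -/
noncomputable def psiW (P : W.S) (δ δ' : W.Δ P) : ⋀[ZMod p]^2 (W.Δ P → ZMod p) :=
  ⟨ExteriorAlgebra.ιMulti (ZMod p) 2 ![W.psi P δ, W.psi P δ'],
   ExteriorAlgebra.ιMulti_range (ZMod p) 2 (Set.mem_range_self _)⟩

/-- The subspace I_P of Λ² A_P. -/
noncomputable def IP (P : W.S) : Submodule (ZMod p) (⋀[ZMod p]^2 (W.Δ P → ZMod p)) :=
  Submodule.span (ZMod p)
    ({x | ∃ δ1 δ2 δ3 : W.Δ P, x = W.psiW P δ1 δ2 + W.psiW P δ2 δ3 + W.psiW P δ3 δ1} ∪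
     {x | (∀ δ δ' : W.Δ P, W.φ P δ = W.φ P δ') ∧ ∃ δ1 δ2 : W.Δ P, x = W.psiW P δ1 δ2})

/-- The degree-two part A² = A^{2,0} ⊕ A^{2,∞} of the Combinatorial Aomoto algebra. -/
abbrev A2 (d : W.C → ℕ) : Type :=
  ((P : W.S) → (⋀[ZMod p]^2 (W.Δ P → ZMod p)) ⧸ W.IP P) ×
  ({i : W.C // p ∣ d i} → ZMod p)

/-- The wedge product A¹ × A¹ → A², extending σ_i ∧ σ_j bilinearly. -/
noncomputable def wedge (d : W.C → ℕ) (α β : W.C → ZMod p) : W.A2 d :=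
  (fun P => ∑ δ : W.Δ P, ∑ δ' : W.Δ P,
      (α (W.φ P δ) * β (W.φ P δ') * (W.muk P δ δ' : ZMod p)) •
        Submodule.Quotient.mk (W.psiW P δ δ'),
   fun i => α i.1 * (∑ j : W.C, (d j : ZMod p) * β j)
          - β i.1 * (∑ j : W.C, (d j : ZMod p) * α j))

/-- The linear map ·∧α : A¹ → A², β ↦ β ∧ α. -/
noncomputable def wedgeL (d : W.C → ℕ) (α : W.C → ZMod p) :
    (W.C → ZMod p) →ₗ[ZMod p] W.A2 d where
  toFun β := W.wedge d β α
  map_add' β γ := by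
    refine Prod.ext ?_ ?_
    · funext P
      simp only [wedge, Pi.add_apply, Prod.fst_add]
      rw [← Finset.sum_add_distrib]
      refine Finset.sum_congr rfl fun δ _ => ?_
      rw [← Finset.sum_add_distrib]
      refine Finset.sum_congr rfl fun δ' _ => ?_
      rw [← add_smul, add_mul, add_mul]
    · funext i
      simp only [wedge, Pi.add_apply, Prod.snd_add]
      rw [show (∑ x : W.C, (d x : ZMod p) * (β x + γ x))
            = (∑ x : W.C, (d x : ZMod p) * β x) + ∑ x : W.C, (d x : ZMod p) * γ x by
        rw [← Finset.sum_add_distrib]; exact Finset.sum_congr rfl fun x _ => by ring]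
      ring
  map_smul' c β := by
    refine Prod.ext ?_ ?_
    · funext P
      simp only [wedge, Pi.smul_apply, smul_eq_mul, RingHom.id_apply, Prod.smul_fst]
      rw [Finset.smul_sum]
      refine Finset.sum_congr rfl fun δ _ => ?_
      rw [Finset.smul_sum]
      refine Finset.sum_congr rfl fun δ' _ => ?_
      rw [smul_smul]
      ring_nf
    · funext i
      simp only [wedge, Pi.smul_apply, smul_eq_mul, RingHom.id_apply, Prod.smul_snd]
      rw [show (∑ x : W.C, (d x : ZMod p) * (c * β x)) = c * ∑ x : W.C, (d x : ZMod p) * β x by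
        rw [Finset.mul_sum]; exact Finset.sum_congr rfl fun x _ => by ring]
      ring

/-- The kernel of ·∧α : A¹ → A². -/
noncomputable def wedgeKer (d : W.C → ℕ) (α : W.C → ZMod p) :
    Submodule (ZMod p) (W.C → ZMod p) :=
  LinearMap.ker (W.wedgeL d α)

/-- H¹ of the Combinatorial Aomoto complex with differential ·∧α. -/
noncomputable abbrev H1 (d : W.C → ℕ) (α : W.C → ZMod p) :=
  (W.wedgeKer d α) ⧸
    (Submodule.comap (W.wedgeKer d α).subtype (Submodule.span (ZMod p) {α}))

end WeakComb

namespace WeakComb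

variable {p : ℕ} (W : WeakComb p)

/-- The resonance condition for (α,β) at the branch δ of the point P. -/
def ResCond (α β : W.C → ZMod p) (P : W.S) (δ : W.Δ P) : Prop :=
  β (W.φ P δ) * (∑ j : W.C, (W.muC P δ j : ZMod p) * α j)
    - α (W.φ P δ) * (∑ j : W.C, (W.muC P δ j : ZMod p) * β j) = 0

/-- P is a p-transversal point for the pair of components i ≠ j. -/
def PTransPoint (P : W.S) (i j : W.C) : Prop :=
  i ≠ j ∧ (∀ δ : W.Δ P, W.φ P δ = i ∨ W.φ P δ = j) ∧
  (∃ δ : W.Δ P, W.φ P δ = i) ∧ (∃ δ : W.Δ P, W.φ P δ = j) ∧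
  ((∃ δ : W.Δ P, W.φ P δ = i ∧ ((W.muC P δ j : ZMod p) ≠ 0)) ∨
   (∃ δ : W.Δ P, W.φ P δ = j ∧ ((W.muC P δ i : ZMod p) ≠ 0)))

/-- The components i and j are p-transversal at a point. -/
def PTransComponents (i j : W.C) : Prop := ∃ P : W.S, W.PTransPoint P i j

/-- α is non-coordinate if all its coordinates are nonzero. -/
def NonCoordinate (α : W.C → ZMod p) : Prop := ∀ i, α i ≠ 0

end WeakComb

/-- The setoid (partition) obtained from s by merging the classes of c₀ and c₁. -/
def mergeSetoid {α : Type*} (s : Setoid α) (c₀ c₁ : α) : Setoid α :=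
  Relation.EqvGen.setoid (fun a b => s.r a b ∨ (a = c₀ ∧ b = c₁))

namespace WeakComb

variable {p : ℕ} (W : WeakComb p)

/-- W is p-transversal at P with respect to (α, π), where the surjection π is encoded by the
setoid s of its fibres; the two classes π(φ_P(Δ_P)) = {i',j'} are those of c₀ and c₁. -/
def PTransversalAt (α : W.C → ZMod p) (s : Setoid W.C) (P : W.S) (c₀ c₁ : W.C) : Prop :=
  ¬ s.r c₀ c₁ ∧
  (∀ δ : W.Δ P, s.r (W.φ P δ) c₀ ∨ s.r (W.φ P δ) c₁) ∧
  (∃ δ : W.Δ P, s.r (W.φ P δ) c₀) ∧ (∃ δ : W.Δ P, s.r (W.φ P δ) c₁) ∧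
  ∃ δ : W.Δ P, s.r (W.φ P δ) c₀ ∧
    (∑ δ' : W.Δ P, if s.r (W.φ P δ') c₁
        then (W.muk P δ δ' : ZMod p) * α (W.φ P δ') else 0) ≠ 0

/-- A p-reduction step with respect to α. -/
def RedStep (α : W.C → ZMod p) (s s' : Setoid W.C) : Prop :=
  ∃ (P : W.S) (c₀ c₁ : W.C), W.PTransversalAt α s P c₀ c₁ ∧ s' = mergeSetoid s c₀ c₁

/-- W is completely p-reductive with respect to α: starting from the identity partition (⊥),
some finite sequence of p-reduction steps reaches the one-class partition (⊤). -/
def CompletelyPReductive (α : W.C → ZMod p) : Prop :=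
  Relation.ReflTransGen (W.RedStep α) ⊥ ⊤

/-- β is π-proportional to α, for the surjection π encoded by the setoid s: on each class
of s, β is a scalar multiple of α. -/
def Proportional (s : Setoid W.C) (α β : W.C → ZMod p) : Prop :=
  ∀ c : W.C, ∃ l : ZMod p, ∀ c', s.r c c' → β c' = l * α c'

end WeakComb

/-- A combinatorial quasi-fiber structure of rank r on W. -/
structure QuasiFiber {p : ℕ} (W : WeakComb p) (r : ℕ) where
  /-- which quasi-fiber each component belongs to -/
  g : W.C → Fin r
  g_surj : Function.Surjective g
  /-- multiplicities of components inside the quasi-fibers -/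
  m : W.C → ℕ
  m_pos : ∀ c, 0 < m c
  /-- the set of base points -/
  B : Set W.S
  fiber_off_base : ∀ P : W.S, P ∉ B → ∀ δ δ' : W.Δ P, g (W.φ P δ) = g (W.φ P δ')

namespace WeakComb

variable {p : ℕ} (W : WeakComb p) {r : ℕ}

/-- M_s(δ) for a branch δ at a base point P. -/
noncomputable def Mcoef (F : QuasiFiber W r) (P : W.S) (δ : W.Δ P) (s : Fin r) : ZMod p :=
  ∑ δ' : W.Δ P,
    if W.φ P δ' ≠ W.φ P δ ∧ F.g (W.φ P δ') = s
      then ((F.m (W.φ P δ') * W.μ P δ δ' : ℕ) : ZMod p) else 0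

/-- ω_a = Σ_c m_c · a_{g(c)} · σ_c ∈ A¹. -/
noncomputable def omega (F : QuasiFiber W r) (a : Fin r → ZMod p) : W.C → ZMod p :=
  fun c => (F.m c : ZMod p) * a (F.g c)

/-- The restricted combinatorics W°_s of the quasi-fiber s. -/
noncomputable def restrict (F : QuasiFiber W r) (s : Fin r) : WeakComb p where
  C := {c : W.C // F.g c = s}
  fintypeC := Fintype.ofFinite _
  decEqC := inferInstance
  nonemptyC := by obtain ⟨c, hc⟩ := F.g_surj s; exact ⟨⟨c, hc⟩⟩
  S := {P : W.S // Nonempty (W.Δ P) ∧ ∀ δ : W.Δ P, F.g (W.φ P δ) = s}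
  fintypeS := Fintype.ofFinite _
  decEqS := inferInstance
  Δ := fun P => W.Δ P.1
  fintypeΔ := fun P => inferInstance
  decEqΔ := fun P => inferInstance
  φ := fun P δ => ⟨W.φ P.1 δ, P.2.2 δ⟩
  μ := fun P δ δ' => W.μ P.1 δ δ'
  μ_symm := fun P δ δ' h => W.μ_symm P.1 δ δ' (fun e => h (Subtype.ext e))
  μ_pos := fun P δ δ' h => W.μ_pos P.1 δ δ' (fun e => h (Subtype.ext e))

/-- The restriction ω_a|_s of ω_a to the restricted combinatorics W°_s. -/
noncomputable def omegaRes (F : QuasiFiber W r) (a : Fin r → ZMod p) (s : Fin r) :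
    (W.restrict F s).C → ZMod p :=
  fun c => (F.m c.1 : ZMod p) * a s

end WeakComb

namespace WeakComb

variable {p : ℕ} (W : WeakComb p)

/-- The linear form on `Λ² A_P` sending `v ∧ w` to `ε(v) w_δ - ε(w) v_δ`, where `ε` is the sum of
the coordinates; it is the `2 × 2` determinant of the pairs `(ε(v), v_δ)` and `(ε(w), w_δ)`. -/
noncomputable def contraction (P : W.S) (δ : W.Δ P) :
    ⋀[ZMod p]^2 (W.Δ P → ZMod p) →ₗ[ZMod p] ZMod p :=
  exteriorPower.alternatingMapLinearEquiv
    ((Matrix.detRowAlternating (n := Fin 2) (R := ZMod p)).compLinearMap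
      (LinearMap.pi ![∑ a : W.Δ P, LinearMap.proj a, LinearMap.proj δ]))

lemma contraction_psiW (P : W.S) (δ a b : W.Δ P) :
    W.contraction P δ (W.psiW P a b) = (if b = δ then 1 else 0) - (if a = δ then 1 else 0) := by
  have hW : W.psiW P a b = exteriorPower.ιMulti (ZMod p) 2 ![W.psi P a, W.psi P b] := rfl
  rw [hW, contraction, exteriorPower.alternatingMapLinearEquiv_apply_ιMulti]
  change Matrix.det (Matrix.of fun i => LinearMap.pi
    ![∑ a : W.Δ P, LinearMap.proj a, LinearMap.proj δ] (![W.psi P a, W.psi P b] i)) = _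
  rw [Matrix.det_fin_two]
  simp [psi, Pi.single_apply, eq_comm]

lemma muk_comm (P : W.S) (δ δ' : W.Δ P) : W.muk P δ δ' = W.muk P δ' δ := by
  unfold muk
  by_cases e : W.φ P δ = W.φ P δ'
  · simp [e]
  · rw [if_neg e, if_neg (Ne.symm e), W.μ_symm P δ δ' e]

/-- When all branches at `P` lie on one component, `I_P` is all of `Λ² A_P`, so the inclusion
fails as soon as there are two branches. -/
lemma IP_le_ker_contraction (P : W.S) (δ : W.Δ P)
    (hP : ¬ ∀ a b : W.Δ P, W.φ P a = W.φ P b) :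
    W.IP P ≤ LinearMap.ker (W.contraction P δ) := by
  refine Submodule.span_le.mpr ?_
  rintro x (⟨a, b, c, rfl⟩ | ⟨hall, -⟩)
  · simp only [SetLike.mem_coe, LinearMap.mem_ker, map_add, contraction_psiW]
    ring
  · exact absurd hall hP

lemma sum_muC_mul (P : W.S) (δ : W.Δ P) (γ : W.C → ZMod p) :
    ∑ j : W.C, (W.muC P δ j : ZMod p) * γ j
      = ∑ δ' : W.Δ P, (W.muk P δ δ' : ZMod p) * γ (W.φ P δ') := by
  simp only [muC, Nat.cast_sum, Nat.cast_ite, Nat.cast_zero, Finset.sum_mul, ite_mul, zero_mul]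
  rw [Finset.sum_comm]
  simp

/-- A pair with vanishing product satisfies the resonance condition at every branch. -/
lemma resCond_of_wedge_eq_zero (d : W.C → ℕ) (α β : W.C → ZMod p)
    (h : W.wedge d α β = 0) (P : W.S) (δ : W.Δ P) : W.ResCond α β P δ := by
  unfold ResCond
  rw [sum_muC_mul, sum_muC_mul]
  by_cases hP : ∀ a b : W.Δ P, W.φ P a = W.φ P b
  · have hm : ∀ a, W.muk P δ a = 0 := fun a => if_pos (hP δ a)
    simp [hm]
  · have h1 := congrFun (congrArg Prod.fst h) P
    simp only [wedge, Prod.fst_zero, Pi.zero_apply] at h1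
    have h2 := congrArg ((W.IP P).liftQ _ (W.IP_le_ker_contraction P δ hP)) h1
    simp only [map_sum, map_smul, map_zero, Submodule.liftQ_apply, contraction_psiW,
      smul_eq_mul, mul_sub, mul_ite, mul_one, mul_zero, Finset.sum_sub_distrib] at h2
    rw [Finset.sum_comm (f := fun a b => if a = δ then
      α (W.φ P a) * β (W.φ P b) * (W.muk P a b : ZMod p) else 0)] at h2
    simp only [Finset.sum_ite_eq', Finset.mem_univ, if_true] at h2
    rw [← h2, Finset.mul_sum, Finset.mul_sum]
    congr 1
    · refine Finset.sum_congr rfl fun a _ => ?_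
      rw [W.muk_comm P δ a]
      ring
    · exact Finset.sum_congr rfl fun a _ => by ring

/-- Bezout turns `d i` times the resonance expression at infinity into the sum of the local
resonance expressions over the branches of the component `i`. -/
lemma degree_mul_eq_sum (d : W.C → ℕ) (hd : W.IsDegree d) (α β : W.C → ZMod p) (i : W.C) :
    (d i : ZMod p) * (β i * (∑ j : W.C, (d j : ZMod p) * α j)
        - α i * (∑ j : W.C, (d j : ZMod p) * β j))
      = ∑ P : W.S, ∑ δ : W.Δ P, if W.φ P δ = i then
          β (W.φ P δ) * (∑ j : W.C, (W.muC P δ j : ZMod p) * α j)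
            - α (W.φ P δ) * (∑ j : W.C, (W.muC P δ j : ZMod p) * β j) else 0 := by
  have hB : ∀ j, (d i : ZMod p) * d j * (β i * α j - α i * β j)
      = ∑ P : W.S, ∑ δ : W.Δ P, if W.φ P δ = i then
          (W.muC P δ j : ZMod p) * (β i * α j - α i * β j) else 0 := by
    intro j
    by_cases hij : i = j
    · subst hij
      have h0 : β i * α i - α i * β i = 0 := by ring
      simp [h0]
    · have := congrArg (Nat.cast (R := ZMod p)) (hd.2 i j hij)
      push_cast at this
      rw [this]
      simp only [Finset.sum_mul, ite_mul, zero_mul]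
  calc _ = ∑ j, (d i : ZMod p) * d j * (β i * α j - α i * β j) := by
        rw [Finset.mul_sum, Finset.mul_sum, ← Finset.sum_sub_distrib, Finset.mul_sum]
        exact Finset.sum_congr rfl fun j _ => by ring
    _ = _ := by
        rw [Finset.sum_congr rfl fun j _ => hB j, Finset.sum_comm]
        refine Finset.sum_congr rfl fun P _ => ?_
        rw [Finset.sum_comm]
        refine Finset.sum_congr rfl fun δ _ => ?_
        split_ifs with hδ
        · subst hδ
          rw [Finset.mul_sum, Finset.mul_sum, ← Finset.sum_sub_distrib]
          exact Finset.sum_congr rfl fun j _ => by ring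
        · simp

end WeakComb

section Statements

open WeakComb

variable {p : ℕ} [Fact p.Prime]

/-- the resonance condition at infinity, equation `eq:lambda_i`. -/
theorem stmt8 (W : WeakComb p) (d : W.C → ℕ) (hd : W.IsDegree d)
    (α β : W.C → ZMod p) (h : W.wedge d α β = 0) :
    (∀ i : W.C,
      β i * (∑ j : W.C, (d j : ZMod p) * α j)
        = α i * (∑ j : W.C, (d j : ZMod p) * β j)) ∧
    (∀ i : W.C, α i = 0 → (∑ j : W.C, (d j : ZMod p) * α j) ≠ 0 → β i = 0) := by
  have key : ∀ i : W.C, β i * (∑ j : W.C, (d j : ZMod p) * α j)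
      = α i * (∑ j : W.C, (d j : ZMod p) * β j) := by
    intro i
    by_cases hi : p ∣ d i
    · have h2 := congrFun (congrArg Prod.snd h) ⟨i, hi⟩
      simp only [wedge, Prod.snd_zero, Pi.zero_apply] at h2
      exact (sub_eq_zero.mp h2).symm
    · have hi' : (d i : ZMod p) ≠ 0 := fun e => hi ((ZMod.natCast_eq_zero_iff _ _).mp e)
      refine sub_eq_zero.mp ((mul_eq_zero.mp ?_).resolve_left hi')
      rw [W.degree_mul_eq_sum d hd]
      refine Finset.sum_eq_zero fun P _ => Finset.sum_eq_zero fun δ _ => ?_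
      split_ifs with hδ
      · subst hδ
        exact W.resCond_of_wedge_eq_zero d α β h P δ
      · rfl
  refine ⟨key, fun i hα hne => ?_⟩
  have := key i
  rw [hα, zero_mul] at this
  exact (mul_eq_zero.mp this).resolve_right hne

end Statements
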